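/- arXiv:2107.11766 — 2 statements merged into one kernel-verified Lean document; each statement's English description precedes it below -/
import Mathlib

section
/- Let F = K(λ) be the cyclotomic function field with modulus p(x) = x^2 + ax + b over K = F_q(x), where λ satisfies λ^{q^2-1} + (x^q + x + a)λ^{q-1} + x^2 + ax + b = 0, and set u = x + λ^{q-1}. Then λ^{q-1} = (u^2 + au + b)/(u^q + u) holds in F, and consequently F = F_q(u, λ) is a Kummer extension of degree q - 1 over F_q(u) defined by λ^{q-1} = (u^2+au+b)/(u^q+u). -/
open Polynomial

/-!
Put `y = λ ^ (q - 1)`. Since `λ ^ (q ^ 2 - 1) = y ^ (q + 1)`, the equation of `λ` involves only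
`x`, `x ^ q`, `y` and `y ^ q`, and additivity of the `q`-power map turns it into
`y * (u - u ^ q) = f(u)` with `u = x + y` and `f = X ^ 2 + a X + b`. An irreducible `f` that does
not divide `X ^ q - X` is coprime to it, so `u - u ^ q ≠ 0` and `x = u - y` lies in `k(u)`; in
particular `u` is transcendental. Over the principal ideal domain `k[u]` the polynomial
`(u - u ^ q) T ^ (q - 1) - f(u)` is then Eisenstein at the prime `f(u)`, which gives the degree.
-/

open IntermediateField

section Eisenstein

variable {R : Type*} [CommRing R] {p d : R} {m : ℕ}

theorem isPrimitive_C_mul_X_pow_sub_C (hp : Irreducible p) (hd : ¬p ∣ d) (hm : m ≠ 0) :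
    (C d * X ^ m - C p).IsPrimitive := by
  intro r hr
  rw [C_dvd_iff_dvd_coeff] at hr
  have hrp : r ∣ p := by simpa [coeff_X_pow, hm.symm] using hr 0
  have hrd : r ∣ d := by simpa [coeff_C_of_ne_zero hm] using hr m
  exact hp.isRelPrime_iff_not_dvd.2 hd hrp hrd

theorem natDegree_C_mul_X_pow_sub_C (hd : d ≠ 0) : (C d * X ^ m - C p).natDegree = m := by
  rw [natDegree_sub_C, natDegree_C_mul_X_pow m d hd]

variable [IsDomain R]

theorem isEisensteinAt_C_mul_X_pow_sub_C (hp : Prime p) (hd : ¬p ∣ d) (hm : m ≠ 0) :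
    (C d * X ^ m - C p).IsEisensteinAt (Ideal.span {p}) := by
  have hd0 : d ≠ 0 := fun h => hd (h ▸ dvd_zero p)
  refine ⟨?_, fun {i} hi => ?_, ?_⟩
  · rw [leadingCoeff, natDegree_C_mul_X_pow_sub_C hd0, Ideal.mem_span_singleton]
    simpa [coeff_C_of_ne_zero hm] using hd
  · rw [natDegree_C_mul_X_pow_sub_C hd0] at hi
    rw [Ideal.mem_span_singleton]
    rcases eq_or_ne i 0 with rfl | hi0
    · simp [coeff_X_pow, hm.symm]
    · simp [coeff_X_pow, coeff_C_of_ne_zero hi0, hi.ne]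
  · have hsq : ¬p ^ 2 ∣ p := fun h =>
      hp.not_isUnit (hp.irreducible.squarefree p (sq p ▸ h))
    simpa [Ideal.span_singleton_pow, Ideal.mem_span_singleton, coeff_X_pow, hm.symm] using hsq

theorem irreducible_C_mul_X_pow_sub_C (hp : Prime p) (hd : ¬p ∣ d) (hm : m ≠ 0) :
    Irreducible (C d * X ^ m - C p) := by
  have hd0 : d ≠ 0 := fun h => hd (h ▸ dvd_zero p)
  refine (isEisensteinAt_C_mul_X_pow_sub_C hp hd hm).irreducible
    ((Ideal.span_singleton_prime hp.ne_zero).2 hp)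
    (isPrimitive_C_mul_X_pow_sub_C hp.irreducible hd hm) ?_
  rw [natDegree_C_mul_X_pow_sub_C hd0]
  exact hm.pos

end Eisenstein

theorem finrank_eq_natDegree_of_irreducible_of_aeval_eq_zero {K L : Type*} [Field K] [Field L]
    [Algebra K L] {P : K[X]} {θ : L} (hP : Irreducible P) (hroot : aeval θ P = 0)
    (hθ : K⟮θ⟯ = ⊤) : Module.finrank K L = P.natDegree := by
  have hint : IsIntegral K θ := IsAlgebraic.isIntegral ⟨P, hP.ne_zero, hroot⟩
  rw [← finrank_top', ← hθ, adjoin.finrank hint, ← minpoly.eq_of_irreducible hP hroot,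
    natDegree_mul_C (inv_ne_zero (leadingCoeff_ne_zero.2 hP.ne_zero))]

theorem finrank_eq_of_pow_mul_eq_prime {R K L : Type*} [CommRing R] [IsDomain R] [IsGCDMonoid R]
    [Field K] [Field L] [Algebra R K] [IsFractionRing R K] [Algebra K L] [Algebra R L]
    [IsScalarTower R K L] {p d : R} {m : ℕ} {θ : L} (hp : Prime p) (hd : ¬p ∣ d) (hm : m ≠ 0)
    (hpow : θ ^ m * algebraMap R L d = algebraMap R L p) (hθ : K⟮θ⟯ = ⊤) :
    Module.finrank K L = m := by
  have hd0 : d ≠ 0 := fun h => hd (h ▸ dvd_zero p)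
  have hirr : Irreducible ((C d * X ^ m - C p).map (algebraMap R K)) :=
    (isPrimitive_C_mul_X_pow_sub_C hp.irreducible hd hm
      |>.irreducible_iff_irreducible_map_fraction_map).1 (irreducible_C_mul_X_pow_sub_C hp hd hm)
  have hroot : aeval θ ((C d * X ^ m - C p).map (algebraMap R K)) = 0 := by
    rw [aeval_map_algebraMap, map_sub, map_mul, map_pow, aeval_X, aeval_C, aeval_C, ← hpow,
      mul_comm, sub_self]
  rw [finrank_eq_natDegree_of_irreducible_of_aeval_eq_zero hirr hroot hθ,
    natDegree_map_eq_of_injective (IsFractionRing.injective R K),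
    natDegree_C_mul_X_pow_sub_C hd0]

section RationalFunctionField

variable {k F : Type*} [Field k] [Field F] [Algebra k F]

theorem adjoin_image_algebraMap_union {K : Type*} [Field K] [Algebra k K] [Algebra K F]
    [IsScalarTower k K F] {S : Set K} (hS : adjoin k S = ⊤) (T : Set F) :
    adjoin k (algebraMap K F '' S ∪ T) = (adjoin K T).restrictScalars k := by
  refine le_antisymm (adjoin_le_iff.2 (Set.union_subset ?_ (subset_adjoin K T))) ?_
  · rintro _ ⟨s, -, rfl⟩
    exact (adjoin K T).algebraMap_mem s
  · have hK (z : K) : algebraMap K F z ∈ adjoin k (algebraMap K F '' S ∪ T) := by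
      have hz : algebraMap K F z ∈ (adjoin k S).map (IsScalarTower.toAlgHom k K F) :=
        ⟨z, by simp [hS], rfl⟩
      rw [adjoin_map] at hz
      exact adjoin.mono k _ _ Set.subset_union_left hz
    exact adjoin_le_subfield K T (K := (adjoin k (algebraMap K F '' S ∪ T)).toSubfield)
      (Set.range_subset_iff.2 hK) (Set.subset_union_right.trans (subset_adjoin k _))

theorem adjoin_add_pow_pair (x θ : F) (m : ℕ) : k⟮x + θ ^ m, θ⟯ = k⟮x, θ⟯ := by
  have hθ (z : F) : θ ∈ k⟮z, θ⟯ := subset_adjoin _ _ (by simp)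
  have hz (z : F) : z ∈ k⟮z, θ⟯ := subset_adjoin _ _ (by simp)
  refine le_antisymm (adjoin_le_iff.2 ?_) (adjoin_le_iff.2 ?_)
  · rintro z (rfl | rfl)
    exacts [add_mem (hz x) (pow_mem (hθ x) m), hθ x]
  · rintro z (rfl | rfl)
    exacts [by simpa using sub_mem (hz (z + θ ^ m)) (pow_mem (hθ _) m), hθ _]

theorem transcendental_of_mem_adjoin_simple {u x : F} (hx : Transcendental k x) (hxu : x ∈ k⟮u⟯) :
    Transcendental k u := by
  intro hu
  have := isAlgebraic_adjoin_simple hu.isIntegral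
  exact hx (isAlgebraic_iff.1 (Algebra.IsAlgebraic.isAlgebraic (R := k) (⟨x, hxu⟩ : k⟮u⟯)))

theorem aeval_ne_zero_of_mul_aeval_eq {u y : F} {f g : k[X]} (hf : Irreducible f) (hg : ¬f ∣ g)
    (h : y * aeval u g = aeval u f) : aeval u g ≠ 0 := by
  intro hg0
  rcases aeval_ne_zero_of_isCoprime (hf.coprime_iff_not_dvd.2 hg) u with hfu | hgu
  · exact hfu (by rw [← h, hg0, mul_zero])
  · exact hgu hg0

theorem finrank_adjoin_simple_eq_of_pow_mul_aeval_eq {u θ : F} {f g : k[X]} {m : ℕ}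
    (hu : Transcendental k u) (hf : Irreducible f) (hg : ¬f ∣ g) (hm : m ≠ 0)
    (hpow : θ ^ m * aeval u g = aeval u f) (htop : k⟮u, θ⟯ = ⊤) :
    Module.finrank k⟮u⟯ F = m := by
  let : Algebra k[X] k⟮u⟯ := (aeval (AdjoinSimple.gen k u)).toAlgebra
  let : Algebra k[X] F := (aeval u).toAlgebra
  have : IsScalarTower k[X] k⟮u⟯ F := .of_algebraMap_eq fun h =>
    (aeval_algebraMap_apply F (AdjoinSimple.gen k u) h)
  have : IsFractionRing k[X] k⟮u⟯ :=
    .of_algEquiv (K := RatFunc k) <|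
      AlgEquiv.ofRingEquiv (f := (RatFunc.algEquivOfTranscendental u hu).toRingEquiv)
        (RatFunc.algEquivOfTranscendental_algebraMap u hu)
  have hθ : k⟮u⟯⟮θ⟯ = ⊤ := by
    rw [← restrictScalars_eq_top_iff (K := k), adjoin_simple_adjoin_simple, htop]
  exact finrank_eq_of_pow_mul_eq_prime hf.prime hg hm hpow hθ

end RationalFunctionField

theorem mul_sub_pow_expChar_pow_eq {R : Type*} [CommRing R] (p n : ℕ) [ExpChar R p]
    {a b x y : R}
    (h : y ^ (p ^ n + 1) + (x ^ p ^ n + x + a) * y + (x ^ 2 + a * x + b) = 0) :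
    y * ((x + y) - (x + y) ^ p ^ n) = (x + y) ^ 2 + a * (x + y) + b := by
  rw [add_pow_expChar_pow]
  linear_combination -h

theorem not_dvd_X_pow_card_sub_X_of_natDegree_ne_one {k : Type*} [Field k] [Fintype k] {f : k[X]}
    (hf : Irreducible f) (hdeg : f.natDegree ≠ 1) : ¬f ∣ X ^ Fintype.card k - X := fun h =>
  hdeg <| Nat.dvd_one.1 <| hf.natDegree_dvd_of_dvd_X_pow_card_pow_sub_X <| by
    rwa [pow_one, Nat.card_eq_fintype_card]

theorem pow_sq_sub_one_eq {M : Type*} [Monoid M] (z : M) (q : ℕ) :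
    z ^ (q ^ 2 - 1) = (z ^ (q - 1)) ^ (q + 1) := by
  rw [← pow_mul, mul_comm, ← Nat.sq_sub_sq q 1, one_pow]

theorem stmt_16_general {k : Type*} [Field k] (p n q : ℕ) [ExpChar k p] (hq : q = p ^ n)
    (a b : k) (hirr : Irreducible (X ^ 2 + C a * X + C b))
    (hndvd : ¬X ^ 2 + C a * X + C b ∣ X ^ q - X)
    {F : Type*} [Field F] [Algebra k F] [Algebra (RatFunc k) F] [IsScalarTower k (RatFunc k) F]
    (lam x : F) (hx : x = algebraMap (RatFunc k) F RatFunc.X)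
    (heq : lam ^ (q ^ 2 - 1) + (x ^ q + x + algebraMap k F a) * lam ^ (q - 1) +
      (x ^ 2 + algebraMap k F a * x + algebraMap k F b) = 0)
    (hgen : adjoin (RatFunc k) {lam} = ⊤) (u : F) (hu : u = x + lam ^ (q - 1)) :
    lam ^ (q - 1) * (u - u ^ q) = u ^ 2 + algebraMap k F a * u + algebraMap k F b ∧
    u - u ^ q ≠ 0 ∧
    lam ^ (q - 1) = (u ^ 2 + algebraMap k F a * u + algebraMap k F b) / (u - u ^ q) ∧
    adjoin k {u, lam} = (⊤ : IntermediateField k F) ∧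
    Module.finrank (adjoin k {u}) F = q - 1 := by
  have : ExpChar F p := expChar_of_injective_algebraMap (algebraMap k F).injective p
  have hndvd' : ¬X ^ 2 + C a * X + C b ∣ X - X ^ q := by rwa [dvd_sub_comm]
  have hq_sub_one : q - 1 ≠ 0 := by
    have hq0 : q ≠ 0 := hq ▸ (expChar_pow_pos k p n).ne'
    have hq1 : q ≠ 1 := by
      rintro rfl
      simp at hndvd
    omega
  have hfu : aeval u (X ^ 2 + C a * X + C b : k[X]) =
      u ^ 2 + algebraMap k F a * u + algebraMap k F b := by simp
  have hgu : aeval u (X - X ^ q : k[X]) = u - u ^ q := by simp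
  rw [← hfu, ← hgu]
  have hmul : lam ^ (q - 1) * aeval u (X - X ^ q : k[X]) =
      aeval u (X ^ 2 + C a * X + C b : k[X]) := by
    rw [pow_sq_sub_one_eq, hq] at heq
    rw [hfu, hgu, hu, hq]
    exact mul_sub_pow_expChar_pow_eq p n heq
  have hne := aeval_ne_zero_of_mul_aeval_eq hirr hndvd' hmul
  have hdiv := eq_div_of_mul_eq hne hmul
  have htop : adjoin k {u, lam} = (⊤ : IntermediateField k F) := by
    have := adjoin_image_algebraMap_union (RatFunc.adjoin_X (K := k)) ({lam} : Set F)
    rwa [hgen, restrictScalars_top, Set.image_singleton, ← hx, Set.singleton_union,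
      ← adjoin_add_pow_pair x lam (q - 1), ← hu] at this
  have hxt : Transcendental k x :=
    hx ▸ (transcendental_algebraMap_iff (algebraMap (RatFunc k) F).injective).2
      RatFunc.transcendental_X
  have hxu : x ∈ k⟮u⟯ := by
    rw [eq_sub_of_add_eq hu.symm]
    exact sub_mem (mem_adjoin_simple_self k u) ((mem_adjoin_simple_iff k _).2 ⟨_, _, hdiv⟩)
  have hut : Transcendental k u := transcendental_of_mem_adjoin_simple hxt hxu
  exact ⟨hmul, hne, hdiv, htop,
    finrank_adjoin_simple_eq_of_pow_mul_aeval_eq hut hirr hndvd' hq_sub_one hmul htop⟩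

/-- Section 4.1. Let `F = K(λ)` be the cyclotomic function field with modulus
`p(x) = x^2 + ax + b` (a primitive irreducible quadratic) over `K = F_q(x)`, `q = 2^n`,
where `λ` satisfies `λ^{q²-1} + (x^q + x + a)λ^{q-1} + (x² + ax + b) = 0`, and set
`u = x + λ^{q-1}`. Then `λ^{q-1}·(u^q + u) = u² + au + b`, i.e.
`λ^{q-1} = (u² + au + b)/(u^q + u)`, and consequently `F = F_q(u, λ)` is a Kummer
extension of degree `q - 1` over `F_q(u)`. -/
theorem stmt_16 (n q : ℕ) (hn : 0 < n) (hq : q = 2 ^ n) {Fq : Type*} [Field Fq]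
    [Fintype Fq] (hcard : Fintype.card Fq = q) (a b : Fq)
    (hirr : Irreducible (X ^ 2 + C a * X + C b))
    (hprim : IsLeast {e : ℕ | 0 < e ∧ (X ^ 2 + C a * X + C b) ∣ X ^ e - 1} (q ^ 2 - 1))
    {F : Type*} [Field F] [Algebra Fq F] [Algebra (RatFunc Fq) F]
    [IsScalarTower Fq (RatFunc Fq) F]
    (lam : F) (x : F) (hx : x = algebraMap (RatFunc Fq) F RatFunc.X)
    (heq : lam ^ (q ^ 2 - 1) + (x ^ q + x + algebraMap Fq F a) * lam ^ (q - 1) +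
      (x ^ 2 + algebraMap Fq F a * x + algebraMap Fq F b) = 0)
    (hgen : IntermediateField.adjoin (RatFunc Fq) {lam} = ⊤)
    (hdeg : Module.finrank (RatFunc Fq) F = q ^ 2 - 1)
    (u : F) (hu : u = x + lam ^ (q - 1)) :
    lam ^ (q - 1) * (u ^ q + u) =
        u ^ 2 + algebraMap Fq F a * u + algebraMap Fq F b ∧
    u ^ q + u ≠ 0 ∧
    lam ^ (q - 1) =
      (u ^ 2 + algebraMap Fq F a * u + algebraMap Fq F b) / (u ^ q + u) ∧
    IntermediateField.adjoin Fq {u, lam} = (⊤ : IntermediateField Fq F) ∧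
    Module.finrank (IntermediateField.adjoin Fq {u}) F = q - 1 := by
  have : CharP Fq 2 := charP_of_card_eq_prime_pow (hcard.trans hq)
  have : CharP F 2 := charP_of_injective_algebraMap (algebraMap Fq F).injective 2
  have hdeg2 : (X ^ 2 + C a * X + C b).natDegree = 2 := by compute_degree!
  have hndvd : ¬X ^ 2 + C a * X + C b ∣ X ^ q - X := hcard ▸
    not_dvd_X_pow_card_sub_X_of_natDegree_ne_one hirr (by rw [hdeg2]; decide)
  have hsub : u ^ q + u = u - u ^ q := by rw [CharTwo.sub_eq_add, add_comm]
  simpa only [hsub] using stmt_16_general 2 n q hq a b hirr hndvd lam x hx heq hgen u hu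
end

section
/- Let q = 2^n with n ≥ 1. Then there exists a family S of q - 1 binary (±1-valued) sequences of length q + 1 whose maximum correlation (maximum over all nontrivial autocorrelations at delays 1 ≤ t ≤ q and all cross-correlations between distinct sequences at delays 0 ≤ t ≤ q, all indices mod q+1) is at most ⌊2√q⌋ - δ_q, where δ_q = 0 if ⌊2√q⌋ is odd and δ_q = 1 otherwise. -/
/-!
Let `K` be the field with `q` elements and `L / K` its quadratic extension. The sequences are
`j ↦ (-1) ^ Tr (a * u ^ j)`, where `u` generates the group of norm-one elements of `L`, which is
cyclic of order `q + 1`, and `a` runs over `Kˣ`. Each of their correlations is a character sum over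
this group; it is minus a Kloosterman sum of `K`, because `z ↦ z + z⁻¹` maps the norm-one group
and `Kˣ` together two-to-one onto `K`, where the character sums to zero. Being a sum of an odd
number of signs, a correlation is odd, which gives the term `δ_q` once its absolute value is known
to be at most `2√q`.

The Kloosterman sum is bounded as in Manin's elementary proof of the Hasse inequality. On the curve
`y² + xy = x³ + (X + b / X) x² + b²` over `K(X)`, the degree of the `x`-coordinate as a rational
function satisfies the parallelogram law, hence is a nonnegative quadratic form `h`. The point `Q`
with `x = X` has `h Q = 1`, its Frobenius twist `P`, with `x = X ^ q`, has `h P = q`, and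
`h (P + Q)` is `2q` minus twice the number of `x` in `Kˣ` with `Tr (x + b / x) = 0`. The
Cauchy–Schwarz inequality `(h (P + Q) - h P - h Q) ^ 2 ≤ 4 * h P * h Q` is the required bound.
-/

open Polynomial
open scoped RatFunc

section ParallelogramLaw

variable {A : Type*} [AddCommGroup A] {h : A → ℤ}

theorem map_add_zsmul_of_parallelogram
    (hpar : ∀ P Q, h (P + Q) + h (P - Q) = 2 * h P + 2 * h Q) (P Q : A) (m : ℤ) :
    h (P + m • Q) = h P + m * (h (P + Q) - h P - h Q) + m ^ 2 * h Q := by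
  have three_term (k : ℤ) :
      h (P + (k + 1) • Q) + h (P + (k - 1) • Q) = 2 * h (P + k • Q) + 2 * h Q := by
    convert hpar (P + k • Q) Q using 3 <;> module
  suffices h (P + m • Q) = h P + m * (h (P + Q) - h P - h Q) + m ^ 2 * h Q ∧
      h (P + (m + 1) • Q) = h P + (m + 1) * (h (P + Q) - h P - h Q) + (m + 1) ^ 2 * h Q from this.1
  induction m using Int.induction_on with
  | zero => exact ⟨by simp, by simp; ring⟩
  | succ k ih =>
    have := three_term (k + 1)
    rw [add_sub_cancel_right] at this
    exact ⟨ih.2, by linear_combination this + 2 * ih.2 - ih.1⟩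
  | pred k ih =>
    have := three_term (-k)
    rw [sub_add_cancel]
    exact ⟨by linear_combination this + 2 * ih.1 - ih.2, ih.1⟩

theorem map_zsmul_of_parallelogram
    (hpar : ∀ P Q, h (P + Q) + h (P - Q) = 2 * h P + 2 * h Q) (P : A) (m : ℤ) :
    h (m • P) = m ^ 2 * h P := by
  have h_zero : h 0 = 0 := by
    have := hpar 0 0
    rw [add_zero, sub_zero] at this
    linarith
  simpa [h_zero] using map_add_zsmul_of_parallelogram hpar 0 P m

theorem map_zsmul_add_zsmul_of_parallelogram
    (hpar : ∀ P Q, h (P + Q) + h (P - Q) = 2 * h P + 2 * h Q) (P Q : A) (k m : ℤ) :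
    h (k • P + m • Q) = k ^ 2 * h P + k * m * (h (P + Q) - h P - h Q) + m ^ 2 * h Q := by
  have h_add : h (k • P + Q) = h Q + k * (h (P + Q) - h P - h Q) + k ^ 2 * h P := by
    rw [add_comm, map_add_zsmul_of_parallelogram hpar, add_comm Q P]
    ring
  rw [map_add_zsmul_of_parallelogram hpar, h_add, map_zsmul_of_parallelogram hpar]
  ring

theorem sq_polar_le_of_parallelogram
    (hpar : ∀ P Q, h (P + Q) + h (P - Q) = 2 * h P + 2 * h Q) (h_nonneg : ∀ P, 0 ≤ h P)
    (P Q : A) : (h (P + Q) - h P - h Q) ^ 2 ≤ 4 * h P * h Q := by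
  set B := h (P + Q) - h P - h Q with hB
  have form_nonneg (k m : ℤ) : 0 ≤ k ^ 2 * h P + k * m * B + m ^ 2 * h Q := by
    rw [hB, ← map_zsmul_add_zsmul_of_parallelogram hpar]
    exact h_nonneg _
  rcases (h_nonneg P).eq_or_lt with hP | hP
  · have := form_nonneg (-B * (h Q + 1)) 1
    rw [← hP] at this ⊢
    by_contra! hB_sq
    nlinarith [h_nonneg Q]
  · refine le_of_mul_le_mul_left ?_ hP
    linarith [form_nonneg (-B) (2 * h P)]

end ParallelogramLaw

section RatHeight

variable {K : Type*} [Field K]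

/-- The degree of a rational function as a self-map of the projective line; it is the height on
the function field `K(X)`. -/
noncomputable def ratHeight (x : K⟮X⟯) : ℕ := max x.num.natDegree x.denom.natDegree

@[simp]
theorem ratHeight_zero : ratHeight (0 : K⟮X⟯) = 0 := by simp [ratHeight]

@[simp]
theorem ratHeight_algebraMap (f : K[X]) : ratHeight (algebraMap K[X] K⟮X⟯ f) = f.natDegree := by
  simp [ratHeight]

theorem ratHeight_div {f g : K[X]} (hg : g ≠ 0) (hfg : IsCoprime f g) :
    ratHeight (algebraMap K[X] K⟮X⟯ f / algebraMap K[X] K⟮X⟯ g) =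
      max f.natDegree g.natDegree := by
  set x := algebraMap K[X] K⟮X⟯ f / algebraMap K[X] K⟮X⟯ g with hx
  have cross : x.num * g = f * x.denom := (RatFunc.num_mul_eq_mul_denom_iff hg).2 hx
  have hnum : Associated x.num f := associated_of_dvd_dvd
    (x.isCoprime_num_denom.dvd_of_dvd_mul_right ⟨g, cross.symm⟩)
    (hfg.dvd_of_dvd_mul_right ⟨x.denom, cross⟩)
  have hdenom : Associated x.denom g := associated_of_dvd_dvd
    (x.isCoprime_num_denom.symm.dvd_of_dvd_mul_left ⟨f, by rw [cross, mul_comm]⟩)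
    (hfg.symm.dvd_of_dvd_mul_left ⟨x.num, by rw [← cross, mul_comm]⟩)
  rw [ratHeight, natDegree_eq_of_degree_eq (degree_eq_degree_of_associated hnum),
    natDegree_eq_of_degree_eq (degree_eq_degree_of_associated hdenom)]

theorem exists_isCoprime_eq_div (x : K⟮X⟯) : ∃ f g : K[X], g ≠ 0 ∧ IsCoprime f g ∧
    x = algebraMap K[X] K⟮X⟯ f / algebraMap K[X] K⟮X⟯ g ∧
      ratHeight x = max f.natDegree g.natDegree :=
  ⟨x.num, x.denom, x.denom_ne_zero, x.isCoprime_num_denom, (x.num_div_denom).symm, rfl⟩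

-- Gauss's lemma for `(g₁ T - f₁) (g₂ T - f₂)`: a product of primitive polynomials is primitive.
theorem mul_dvd_of_isCoprime {R : Type*} [CommRing R] {f₁ g₁ f₂ g₂ D : R}
    (h₁ : IsCoprime f₁ g₁) (h₂ : IsCoprime f₂ g₂)
    (hadd : g₁ * g₂ ∣ D * (f₁ * g₂ + f₂ * g₁)) (hmul : g₁ * g₂ ∣ D * (f₁ * f₂)) :
    g₁ * g₂ ∣ D := by
  obtain ⟨a₁, b₁, hab₁⟩ := h₁
  obtain ⟨a₂, b₂, hab₂⟩ := h₂
  obtain ⟨S, hS⟩ := hadd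
  obtain ⟨P, hP⟩ := hmul
  set c := a₁ * b₂ - b₁ * a₂
  have one_eq : c * (f₁ * g₂) + (b₁ * a₂ * (f₁ * g₂ + f₂ * g₁) + a₁ * a₂ * (f₁ * f₂) +
      b₁ * b₂ * (g₁ * g₂)) = 1 := by
    linear_combination a₂ * f₂ * hab₁ + b₂ * g₂ * hab₁ + hab₂
  have dvd_rest : g₁ * g₂ ∣ D * (b₁ * a₂ * (f₁ * g₂ + f₂ * g₁) + a₁ * a₂ * (f₁ * f₂) +
      b₁ * b₂ * (g₁ * g₂)) :=
    ⟨b₁ * a₂ * S + a₁ * a₂ * P + b₁ * b₂ * D,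
      by linear_combination b₁ * a₂ * hS + a₁ * a₂ * hP⟩
  have dvd_sq : g₁ * g₂ ∣ D * (f₁ * g₂) ^ 2 :=
    ⟨S * (f₁ * g₂) - P * (g₁ * g₂), by linear_combination f₁ * g₂ * hS - g₁ * g₂ * hP⟩
  generalize b₁ * a₂ * (f₁ * g₂ + f₂ * g₁) + a₁ * a₂ * (f₁ * f₂) + b₁ * b₂ * (g₁ * g₂) = r at *
  convert dvd_add (dvd_sq.mul_left (c ^ 2)) (dvd_rest.mul_left (1 + c * (f₁ * g₂))) using 1
  linear_combination (-(1 + c * (f₁ * g₂))) * D * one_eq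

theorem max_natDegree_add_max_natDegree_le {f₁ g₁ f₂ g₂ : K[X]} {M : ℕ} (hg₁ : g₁ ≠ 0)
    (hg₂ : g₂ ≠ 0) (hdenom : (g₁ * g₂).natDegree ≤ M)
    (hadd : (f₁ * g₂ + f₂ * g₁).natDegree ≤ M) (hmul : (f₁ * f₂).natDegree ≤ M) :
    max f₁.natDegree g₁.natDegree + max f₂.natDegree g₂.natDegree ≤ M := by
  rw [natDegree_mul hg₁ hg₂] at hdenom
  rcases eq_or_ne f₁ 0 with rfl | hf₁ <;> rcases eq_or_ne f₂ 0 with rfl | hf₂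
  · simpa using hdenom
  · rw [zero_mul, zero_add, natDegree_mul hf₂ hg₁] at hadd
    rw [natDegree_zero]
    omega
  · rw [zero_mul, add_zero, natDegree_mul hf₁ hg₂] at hadd
    rw [natDegree_zero]
    omega
  · rw [natDegree_mul hf₁ hf₂] at hmul
    have deg₁₂ := natDegree_mul hf₁ hg₂
    have deg₂₁ := natDegree_mul hf₂ hg₁
    rcases lt_trichotomy (f₁ * g₂).natDegree (f₂ * g₁).natDegree with h | h | h
    · rw [natDegree_add_eq_right_of_natDegree_lt h] at hadd
      omega
    · omega
    · rw [natDegree_add_eq_left_of_natDegree_lt h] at hadd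
      omega

theorem ratHeight_add_ratHeight_le {x₁ x₂ : K⟮X⟯} {D S P : K[X]} {M : ℕ} (hD : D ≠ 0)
    (hadd : (x₁ + x₂) * algebraMap K[X] K⟮X⟯ D = algebraMap K[X] K⟮X⟯ S)
    (hmul : x₁ * x₂ * algebraMap K[X] K⟮X⟯ D = algebraMap K[X] K⟮X⟯ P)
    (hDM : D.natDegree ≤ M) (hSM : S.natDegree ≤ M) (hPM : P.natDegree ≤ M) :
    ratHeight x₁ + ratHeight x₂ ≤ M := by
  obtain ⟨f₁, g₁, hg₁, hfg₁, rfl, hx₁⟩ := exists_isCoprime_eq_div x₁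
  obtain ⟨f₂, g₂, hg₂, hfg₂, rfl, hx₂⟩ := exists_isCoprime_eq_div x₂
  have hι : Function.Injective (algebraMap K[X] K⟮X⟯) := RatFunc.algebraMap_injective K
  have hg₁' := RatFunc.algebraMap_ne_zero hg₁
  have hg₂' := RatFunc.algebraMap_ne_zero hg₂
  have add_eq : D * (f₁ * g₂ + f₂ * g₁) = g₁ * g₂ * S := hι <| by
    simp only [map_mul, map_add, ← hadd]
    field_simp
  have mul_eq : D * (f₁ * f₂) = g₁ * g₂ * P := hι <| by
    simp only [map_mul, ← hmul]
    field_simp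
  obtain ⟨k, rfl⟩ := mul_dvd_of_isCoprime hfg₁ hfg₂ ⟨S, add_eq⟩ ⟨P, mul_eq⟩
  have hk : k ≠ 0 := right_ne_zero_of_mul hD
  have hg : g₁ * g₂ ≠ 0 := mul_ne_zero hg₁ hg₂
  obtain rfl : (f₁ * g₂ + f₂ * g₁) * k = S := mul_left_cancel₀ hg (by rw [← add_eq]; ring)
  obtain rfl : f₁ * f₂ * k = P := mul_left_cancel₀ hg (by rw [← mul_eq]; ring)
  have natDegree_le {u : K[X]} (hu : (u * k).natDegree ≤ M) : u.natDegree ≤ M := by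
    rcases eq_or_ne u 0 with rfl | hu₀
    · simp
    · exact (natDegree_le_of_dvd (dvd_mul_right u k) (mul_ne_zero hu₀ hk)).trans hu
  rw [hx₁, hx₂]
  exact max_natDegree_add_max_natDegree_le hg₁ hg₂ (natDegree_le hDM) (natDegree_le hSM)
    (natDegree_le hPM)

theorem ratHeight_sq_add_div_sq {a : K} (ha : a ≠ 0) {x : K⟮X⟯} (hx : x ≠ 0) :
    ratHeight (x ^ 2 + algebraMap K[X] K⟮X⟯ (C a) / x ^ 2) = 4 * ratHeight x := by
  obtain ⟨f, g, hg, hfg, rfl, hx_height⟩ := exists_isCoprime_eq_div x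
  have hf : f ≠ 0 := by rintro rfl; simp at hx
  have hf' := RatFunc.algebraMap_ne_zero hf
  have hg' := RatFunc.algebraMap_ne_zero hg
  have eq_div : (algebraMap K[X] K⟮X⟯ f / algebraMap K[X] K⟮X⟯ g) ^ 2 +
        algebraMap K[X] K⟮X⟯ (C a) / (algebraMap K[X] K⟮X⟯ f / algebraMap K[X] K⟮X⟯ g) ^ 2 =
      algebraMap K[X] K⟮X⟯ (f ^ 4 + C a * g ^ 4) / algebraMap K[X] K⟮X⟯ (f ^ 2 * g ^ 2) := by
    simp only [map_add, map_mul, map_pow]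
    field_simp
  have isCoprime_left : IsCoprime (f ^ 4 + C a * g ^ 4) f := by
    have : IsCoprime (C a * g ^ 4) f :=
      (isCoprime_mul_unit_left_left (isUnit_C.2 ha.isUnit) _ _).2 hfg.symm.pow_left
    rw [show f ^ 4 + C a * g ^ 4 = C a * g ^ 4 + f * f ^ 3 by ring]
    exact this.add_mul_left_left _
  have isCoprime_right : IsCoprime (f ^ 4 + C a * g ^ 4) g := by
    rw [show f ^ 4 + C a * g ^ 4 = f ^ 4 + g * (C a * g ^ 3) by ring]
    exact hfg.pow_left.add_mul_left_left _
  rw [eq_div, ratHeight_div (by positivity)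
    (isCoprime_left.pow_right.mul_right isCoprime_right.pow_right), hx_height]
  have deg_f : (f ^ 4).natDegree = 4 * f.natDegree := natDegree_pow f 4
  have deg_g : (C a * g ^ 4).natDegree = 4 * g.natDegree := by
    rw [natDegree_C_mul ha, natDegree_pow]
  have deg_fg : (f ^ 2 * g ^ 2).natDegree = 2 * f.natDegree + 2 * g.natDegree := by
    rw [natDegree_mul (by positivity) (by positivity), natDegree_pow, natDegree_pow]
  have deg_le := natDegree_add_le (f ^ 4) (C a * g ^ 4)
  rcases lt_trichotomy f.natDegree g.natDegree with h | h | h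
  · rw [natDegree_add_eq_right_of_natDegree_lt (by omega)]
    omega
  · omega
  · rw [natDegree_add_eq_left_of_natDegree_lt (by omega)]
    omega

theorem exists_eq_prod_X_sub_C_mul_isCoprime [DecidableEq K] (F : Finset K) (M : K[X]) :
    ∃ f, M = (∏ c ∈ F with M.eval c = 0, (X - C c)) * f ∧
      IsCoprime f (∏ c ∈ F with M.eval c ≠ 0, (X - C c)) := by
  obtain ⟨f, hf⟩ : ∏ c ∈ F with M.eval c = 0, (X - C c) ∣ M :=
    Finset.prod_dvd_of_coprime
      (fun _ _ _ _ hne ↦ isCoprime_X_sub_C_of_isUnit_sub (sub_ne_zero.2 hne).isUnit)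
      (fun c hc ↦ dvd_iff_isRoot.2 (Finset.mem_filter.1 hc).2)
  refine ⟨f, hf, IsCoprime.prod_right fun c hc ↦ ?_⟩
  rw [isCoprime_comm, (irreducible_X_sub_C c).coprime_iff_not_dvd, dvd_iff_isRoot]
  intro hfc
  apply (Finset.mem_filter.1 hc).2
  rw [hf, eval_mul, hfc.eq_zero, mul_zero]

theorem ratHeight_X_mul_div_sq {f g : K[X]} (hg : g ≠ 0) (hfg : IsCoprime f g) (hX : X ∣ g)
    (hdeg : g.natDegree ≤ f.natDegree) :
    ratHeight (algebraMap K[X] K⟮X⟯ X * (algebraMap K[X] K⟮X⟯ f / algebraMap K[X] K⟮X⟯ g) ^ 2) =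
      2 * f.natDegree := by
  obtain ⟨g, rfl⟩ := hX
  have hg' : g ≠ 0 := right_ne_zero_of_mul hg
  have hX' := RatFunc.algebraMap_ne_zero (X_ne_zero (R := K))
  have hg'' := RatFunc.algebraMap_ne_zero hg'
  have eq_div : algebraMap K[X] K⟮X⟯ X *
      (algebraMap K[X] K⟮X⟯ f / algebraMap K[X] K⟮X⟯ (X * g)) ^ 2 =
      algebraMap K[X] K⟮X⟯ (f ^ 2) / algebraMap K[X] K⟮X⟯ (X * g ^ 2) := by
    simp only [map_mul, map_pow]
    field_simp
  have coprime_sq : IsCoprime (f ^ 2) (X * g ^ 2) :=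
    hfg.of_mul_right_left.pow_left.mul_right hfg.of_mul_right_right.pow
  rw [natDegree_mul X_ne_zero hg', natDegree_X] at hdeg
  rw [eq_div, ratHeight_div (mul_ne_zero X_ne_zero (pow_ne_zero 2 hg')) coprime_sq,
    natDegree_pow, natDegree_mul X_ne_zero (pow_ne_zero 2 hg'), natDegree_pow, natDegree_X]
  omega

theorem ratHeight_X_mul_div_prod_sq [DecidableEq K] {F : Finset K} (hF : 0 ∈ F) {M : K[X]}
    (hM_deg : M.natDegree = F.card) (hM_zero : M.eval 0 ≠ 0) :
    ratHeight (algebraMap K[X] K⟮X⟯ X *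
        (algebraMap K[X] K⟮X⟯ M / algebraMap K[X] K⟮X⟯ (∏ c ∈ F, (X - C c))) ^ 2) +
      2 * (F.filter fun c ↦ M.eval c = 0).card = 2 * F.card := by
  obtain ⟨f, hM, hf⟩ := exists_eq_prod_X_sub_C_mul_isCoprime F M
  rw [← Finset.prod_filter_mul_prod_filter_not F (fun c ↦ M.eval c = 0)]
  set Z := F.filter fun c ↦ M.eval c = 0
  set N := F.filter fun c ↦ M.eval c ≠ 0
  have h_card : Z.card + N.card = F.card := Finset.card_filter_add_card_filter_not _
  have monic_prod (s : Finset K) : (∏ c ∈ s, (X - C c)).Monic :=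
    monic_prod_of_monic _ _ fun c _ ↦ monic_X_sub_C c
  have h_prod := RatFunc.algebraMap_ne_zero (monic_prod Z).ne_zero
  have f_ne_zero : f ≠ 0 := by
    rintro rfl
    rw [hM, mul_zero, eval_zero] at hM_zero
    exact hM_zero rfl
  have deg_f : Z.card + f.natDegree = F.card := by
    rw [← hM_deg, hM, (monic_prod Z).natDegree_mul' f_ne_zero,
      natDegree_finsetProd_X_sub_C_eq_card]
  have zero_mem : 0 ∈ N := Finset.mem_filter.2 ⟨hF, hM_zero⟩
  have X_dvd : X ∣ ∏ c ∈ N, (X - C c) := by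
    simpa only [C_0, sub_zero] using Finset.dvd_prod_of_mem (fun c ↦ (X : K[X]) - C c) zero_mem
  rw [hM, map_mul, map_mul, mul_div_mul_left _ _ h_prod,
    ratHeight_X_mul_div_sq (monic_prod N).ne_zero hf X_dvd
      (by rw [natDegree_finsetProd_X_sub_C_eq_card]; omega)]
  omega

end RatHeight

section BinaryCurve

open WeierstrassCurve.Affine

variable {F : Type*} [Field F]

/-- The Weierstrass curve `y² + xy = x³ + A₂x² + A₆`, the normal form of an ordinary elliptic curve
in characteristic two. -/
def binaryCurve (A₂ A₆ : F) : WeierstrassCurve.Affine F := ⟨1, A₂, 0, 0, A₆⟩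

namespace binaryCurve

variable {A₂ A₆ x y x₁ y₁ x₂ y₂ : F}

theorem equation_iff :
    (binaryCurve A₂ A₆).Equation x y ↔ y ^ 2 + x * y = x ^ 3 + A₂ * x ^ 2 + A₆ := by
  rw [WeierstrassCurve.Affine.equation_iff]
  simp [binaryCurve]

variable [CharP F 2]

theorem equation_iff_nonsingular (hA₆ : A₆ ≠ 0) :
    (binaryCurve A₂ A₆).Equation x y ↔ (binaryCurve A₂ A₆).Nonsingular x y := by
  apply equation_iff_nonsingular_of_Δ_ne_zero
  have : (2 : F) = 0 := CharTwo.two_eq_zero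
  have Δ_eq : (binaryCurve A₂ A₆).Δ = A₆ := by
    simp only [WeierstrassCurve.Δ, WeierstrassCurve.b₂, WeierstrassCurve.b₄, WeierstrassCurve.b₆,
      WeierstrassCurve.b₈, binaryCurve]
    grind
  rwa [Δ_eq]

theorem negY_eq : (binaryCurve A₂ A₆).negY x y = y + x := by
  simp [negY, binaryCurve, CharTwo.sub_eq_add, CharTwo.neg_eq]

theorem addX_slope_self [DecidableEq F] (hx : x ≠ 0) (h : (binaryCurve A₂ A₆).Equation x y) :
    (binaryCurve A₂ A₆).addX x x ((binaryCurve A₂ A₆).slope x x y y) = x ^ 2 + A₆ / x ^ 2 := by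
  have : (2 : F) = 0 := CharTwo.two_eq_zero
  have hy : y ≠ (binaryCurve A₂ A₆).negY x y := by
    rw [negY_eq]
    simpa using hx
  have h := equation_iff.1 h
  rw [slope_of_Y_ne rfl hy, negY_eq, sub_add_cancel_left, CharTwo.neg_eq]
  simp only [addX, binaryCurve]
  field_simp
  grind

theorem addX_slope_mul_sq [DecidableEq F] (hx : x₁ ≠ x₂)
    (h₁ : (binaryCurve A₂ A₆).Equation x₁ y₁) (h₂ : (binaryCurve A₂ A₆).Equation x₂ y₂) :
    (binaryCurve A₂ A₆).addX x₁ x₂ ((binaryCurve A₂ A₆).slope x₁ x₂ y₁ y₂) * (x₁ + x₂) ^ 2 =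
      x₁ * y₂ + x₂ * y₁ + x₁ * x₂ * (x₁ + x₂) := by
  have : (2 : F) = 0 := CharTwo.two_eq_zero
  have hx' : x₁ + x₂ ≠ 0 := by rwa [Ne, CharTwo.add_eq_zero]
  have h₁ := equation_iff.1 h₁
  have h₂ := equation_iff.1 h₂
  rw [slope_of_X_ne hx, CharTwo.sub_eq_add, CharTwo.sub_eq_add]
  simp only [addX, binaryCurve]
  field_simp
  grind

theorem addX_slope_negY_mul_sq [DecidableEq F] (hx : x₁ ≠ x₂)
    (h₁ : (binaryCurve A₂ A₆).Equation x₁ y₁) (h₂ : (binaryCurve A₂ A₆).Equation x₂ y₂) :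
    (binaryCurve A₂ A₆).addX x₁ x₂
        ((binaryCurve A₂ A₆).slope x₁ x₂ y₁ ((binaryCurve A₂ A₆).negY x₂ y₂)) * (x₁ + x₂) ^ 2 =
      x₁ * y₂ + x₂ * y₁ + x₁ * x₂ * (x₁ + x₂) + x₁ * x₂ := by
  rw [addX_slope_mul_sq hx h₁ ((equation_neg ..).2 h₂), negY_eq]
  ring

theorem addX_slope_add_addX_slope_negY [DecidableEq F] (hx : x₁ ≠ x₂)
    (h₁ : (binaryCurve A₂ A₆).Equation x₁ y₁) (h₂ : (binaryCurve A₂ A₆).Equation x₂ y₂) :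
    ((binaryCurve A₂ A₆).addX x₁ x₂ ((binaryCurve A₂ A₆).slope x₁ x₂ y₁ y₂) +
      (binaryCurve A₂ A₆).addX x₁ x₂
        ((binaryCurve A₂ A₆).slope x₁ x₂ y₁ ((binaryCurve A₂ A₆).negY x₂ y₂))) * (x₁ + x₂) ^ 2 =
      x₁ * x₂ := by
  rw [add_mul, addX_slope_mul_sq hx h₁ h₂, addX_slope_negY_mul_sq hx h₁ h₂,
    CharTwo.add_cancel_left]

theorem addX_slope_mul_addX_slope_negY [DecidableEq F] (hx : x₁ ≠ x₂)
    (h₁ : (binaryCurve A₂ A₆).Equation x₁ y₁) (h₂ : (binaryCurve A₂ A₆).Equation x₂ y₂) :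
    (binaryCurve A₂ A₆).addX x₁ x₂ ((binaryCurve A₂ A₆).slope x₁ x₂ y₁ y₂) *
      (binaryCurve A₂ A₆).addX x₁ x₂
        ((binaryCurve A₂ A₆).slope x₁ x₂ y₁ ((binaryCurve A₂ A₆).negY x₂ y₂)) * (x₁ + x₂) ^ 2 =
      (x₁ * x₂) ^ 2 + A₆ := by
  have h2 : (2 : F) = 0 := CharTwo.two_eq_zero
  have hx' : x₁ + x₂ ≠ 0 := by rwa [Ne, CharTwo.add_eq_zero]
  have h_add := addX_slope_mul_sq hx h₁ h₂
  have h_sub := addX_slope_negY_mul_sq hx h₁ h₂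
  have h₁ := equation_iff.1 h₁
  have h₂ := equation_iff.1 h₂
  set N := x₁ * y₂ + x₂ * y₁ + x₁ * x₂ * (x₁ + x₂)
  have N_mul : N * (N + x₁ * x₂) = (x₁ + x₂) ^ 2 * ((x₁ * x₂) ^ 2 + A₆) := by
    linear_combination x₁ ^ 2 * h₂ + x₂ ^ 2 * h₁ + (x₁ * x₂ * y₁ * y₂ + (x₁ * y₂ + x₂ * y₁) *
      (x₁ * x₂) * (x₁ + x₂) + (x₁ * x₂) ^ 2 * (x₁ + x₂) + A₂ * (x₁ * x₂) ^ 2 - A₆ * (x₁ * x₂)) * h2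
  apply mul_left_cancel₀ (pow_ne_zero 2 hx')
  rw [← N_mul, ← h_sub, ← h_add]
  ring

end binaryCurve

end BinaryCurve

section Height

open WeierstrassCurve.Affine

variable {K : Type*} [Field K]

theorem ratHeight_add_ratHeight_le_of_mul_sq {a : K} {x₁ x₂ u v : K⟮X⟯} (hx : x₁ + x₂ ≠ 0)
    (hadd : (u + v) * (x₁ + x₂) ^ 2 = x₁ * x₂)
    (hmul : u * v * (x₁ + x₂) ^ 2 = (x₁ * x₂) ^ 2 + algebraMap K[X] K⟮X⟯ (C a)) :
    ratHeight u + ratHeight v ≤ 2 * ratHeight x₁ + 2 * ratHeight x₂ := by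
  obtain ⟨f₁, g₁, hg₁, -, rfl, hx₁⟩ := exists_isCoprime_eq_div x₁
  obtain ⟨f₂, g₂, hg₂, -, rfl, hx₂⟩ := exists_isCoprime_eq_div x₂
  have hg₁' := RatFunc.algebraMap_ne_zero hg₁
  have hg₂' := RatFunc.algebraMap_ne_zero hg₂
  rw [div_add_div _ _ hg₁' hg₂'] at hx hadd hmul
  rw [hx₁, hx₂]
  have deg_f₁_mul_g₂ : (f₁ * g₂).natDegree ≤ f₁.natDegree + g₂.natDegree := natDegree_mul_le
  have deg_g₁_mul_f₂ : (g₁ * f₂).natDegree ≤ g₁.natDegree + f₂.natDegree := natDegree_mul_le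
  have deg_f₁_mul_f₂ : (f₁ * f₂).natDegree ≤ f₁.natDegree + f₂.natDegree := natDegree_mul_le
  have deg_g₁_mul_g₂ : (g₁ * g₂).natDegree ≤ g₁.natDegree + g₂.natDegree := natDegree_mul_le
  refine ratHeight_add_ratHeight_le (D := (f₁ * g₂ + g₁ * f₂) ^ 2)
    (S := (f₁ * g₂) * (g₁ * f₂)) (P := (f₁ * f₂) ^ 2 + C a * (g₁ * g₂) ^ 2) ?_ ?_ ?_ ?_ ?_ ?_
  · intro hD
    apply hx
    rw [← map_mul, ← map_mul, ← map_add, pow_eq_zero_iff two_ne_zero |>.1 hD, map_zero, zero_div]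
  · simp only [map_mul, map_add, map_pow]
    field_simp at hadd
    linear_combination hadd
  · simp only [map_mul, map_add, map_pow]
    field_simp at hmul
    linear_combination hmul
  · have := natDegree_add_le (f₁ * g₂) (g₁ * f₂)
    have := natDegree_pow_le (p := f₁ * g₂ + g₁ * f₂) (n := 2)
    omega
  · have := natDegree_mul_le (p := f₁ * g₂) (q := g₁ * f₂)
    omega
  · have := natDegree_add_le ((f₁ * f₂) ^ 2) (C a * (g₁ * g₂) ^ 2)
    have := natDegree_pow_le (p := f₁ * f₂) (n := 2)
    have := natDegree_C_mul_le a ((g₁ * g₂) ^ 2)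
    have := natDegree_pow_le (p := g₁ * g₂) (n := 2)
    omega

/-- The naive height of a point of a Weierstrass curve over `K(X)`: the height of its
`x`-coordinate. -/
noncomputable def pointHeight {W : WeierstrassCurve.Affine K⟮X⟯} : W.Point → ℕ
  | .zero => 0
  | .some x _ _ => ratHeight x

section

variable {W : WeierstrassCurve.Affine K⟮X⟯}

@[simp]
theorem pointHeight_zero : pointHeight (0 : W.Point) = 0 := rfl

@[simp]
theorem pointHeight_neg (P : W.Point) : pointHeight (-P) = pointHeight P := by
  rcases P with _ | _ <;> rfl

end

namespace binaryCurve

variable [CharP K⟮X⟯ 2] [DecidableEq K⟮X⟯] {a : K} {A₂ : K⟮X⟯}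

theorem pointHeight_add_self (ha : a ≠ 0)
    (P : (binaryCurve A₂ (algebraMap K[X] K⟮X⟯ (C a))).Point) :
    pointHeight (P + P) = 4 * pointHeight P := by
  rcases P with _ | ⟨x, y, h⟩
  · rfl
  rcases eq_or_ne x 0 with rfl | hx
  · rw [Point.add_self_of_Y_eq (by rw [negY_eq, add_zero]), pointHeight_zero, pointHeight,
      ratHeight_zero, mul_zero]
  · rw [Point.add_self_of_Y_ne (by rwa [negY_eq, ne_eq, left_eq_add]), pointHeight, pointHeight,
      addX_slope_self hx h.1, ratHeight_sq_add_div_sq ha hx]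

theorem pointHeight_add_add_pointHeight_sub_le (ha : a ≠ 0)
    (P Q : (binaryCurve A₂ (algebraMap K[X] K⟮X⟯ (C a))).Point) :
    pointHeight (P + Q) + pointHeight (P - Q) ≤ 2 * pointHeight P + 2 * pointHeight Q := by
  rcases eq_or_ne P Q with rfl | hPQ
  · rw [sub_self, pointHeight_add_self ha, pointHeight_zero]
    omega
  rcases eq_or_ne P (-Q) with rfl | hPQ'
  · rw [neg_add_cancel, ← neg_add', pointHeight_neg, pointHeight_add_self ha, pointHeight_neg,
      pointHeight_zero]
    omega
  rcases P with _ | ⟨x₁, y₁, h₁⟩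
  · rw [← Point.zero_def, zero_add, zero_sub, pointHeight_neg, pointHeight_zero]
    omega
  rcases Q with _ | ⟨x₂, y₂, h₂⟩
  · rw [← Point.zero_def, add_zero, sub_zero, pointHeight_zero]
    omega
  have hx : x₁ ≠ x₂ := fun hx ↦ (Point.X_eq_iff.1 hx).elim hPQ hPQ'
  rw [sub_eq_add_neg, Point.neg_some, Point.add_of_X_ne hx, Point.add_of_X_ne hx]
  exact ratHeight_add_ratHeight_le_of_mul_sq (by rwa [Ne, CharTwo.add_eq_zero])
    (addX_slope_add_addX_slope_negY hx h₁.1 h₂.1) (addX_slope_mul_addX_slope_negY hx h₁.1 h₂.1)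

theorem pointHeight_add_add_pointHeight_sub (ha : a ≠ 0)
    (P Q : (binaryCurve A₂ (algebraMap K[X] K⟮X⟯ (C a))).Point) :
    pointHeight (P + Q) + pointHeight (P - Q) = 2 * pointHeight P + 2 * pointHeight Q := by
  apply le_antisymm (pointHeight_add_add_pointHeight_sub_le ha P Q)
  -- Duplication quadruples heights, so the inequality for `P + Q` and `P - Q` is its own converse.
  have h := pointHeight_add_add_pointHeight_sub_le ha (P + Q) (P - Q)
  rw [show P + Q + (P - Q) = P + P by abel, show P + Q - (P - Q) = Q + Q by abel,
    pointHeight_add_self ha, pointHeight_add_self ha] at h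
  omega

theorem sq_pointHeight_add_sub_le (ha : a ≠ 0)
    (P Q : (binaryCurve A₂ (algebraMap K[X] K⟮X⟯ (C a))).Point) :
    ((pointHeight (P + Q) : ℤ) - pointHeight P - pointHeight Q) ^ 2 ≤
      4 * pointHeight P * pointHeight Q :=
  sq_polar_le_of_parallelogram (h := fun P ↦ (pointHeight P : ℤ))
    (fun P Q ↦ mod_cast pointHeight_add_add_pointHeight_sub ha P Q) (fun _ ↦ by positivity) P Q

end binaryCurve

end Height

section FrobeniusSum

/-- `z + z² + z⁴ + ⋯ + z^(2^(n-1))`; on a field with `2^n` elements this is the absolute trace. -/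
def frobeniusSum {R : Type*} [Semiring R] (n : ℕ) (z : R) : R := ∑ i ∈ Finset.range n, z ^ 2 ^ i

theorem sq_frobeniusSum_add_frobeniusSum {R : Type*} [CommRing R] [CharP R 2] (n : ℕ) (z : R) :
    frobeniusSum n z ^ 2 + frobeniusSum n z = z ^ 2 ^ n + z := by
  simp only [frobeniusSum, CharTwo.sum_sq, ← pow_mul, ← pow_succ]
  rw [← CharTwo.sub_eq_add, ← Finset.sum_sub_distrib, Finset.sum_range_sub (fun i ↦ z ^ 2 ^ i),
    CharTwo.sub_eq_add, pow_zero, pow_one]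

end FrobeniusSum

section TraceNumerator

variable {K : Type*} [Field K]

/-- The numerator of `frobeniusSum (m + 1) (X + b / X)`, whose denominator is `X ^ 2 ^ m`. -/
noncomputable def traceNumerator (b : K) (m : ℕ) : K[X] :=
  ∑ i ∈ Finset.range (m + 1), X ^ (2 ^ m - 2 ^ i) * (X ^ 2 + C b) ^ 2 ^ i

theorem natDegree_traceNumerator (b : K) (m : ℕ) :
    (traceNumerator b m).natDegree = 2 ^ (m + 1) := by
  have natDegree_term (i : ℕ) : (X ^ (2 ^ m - 2 ^ i) * (X ^ 2 + C b) ^ 2 ^ i : K[X]).natDegree =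
      2 ^ m - 2 ^ i + 2 ^ i * 2 := by
    have monic_quadratic : (X ^ 2 + C b).Monic := monic_X_pow_add_C b two_ne_zero
    rw [(monic_X_pow _).natDegree_mul (monic_quadratic.pow _), natDegree_X_pow,
      monic_quadratic.natDegree_pow, natDegree_X_pow_add_C]
  have natDegree_lower_terms : (∑ i ∈ Finset.range m,
      X ^ (2 ^ m - 2 ^ i) * (X ^ 2 + C b) ^ 2 ^ i : K[X]).natDegree ≤ 2 ^ (m + 1) - 1 := by
    apply natDegree_sum_le_of_forall_le
    intro i hi
    have := Nat.pow_lt_pow_right one_lt_two (Finset.mem_range.1 hi)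
    rw [natDegree_term]
    omega
  rw [traceNumerator, Finset.sum_range_succ, natDegree_add_eq_right_of_natDegree_lt] <;>
    rw [natDegree_term, Nat.sub_self, zero_add, ← pow_succ]
  have := Nat.two_pow_pos (m + 1)
  omega

theorem eval_zero_traceNumerator (b : K) (m : ℕ) : (traceNumerator b m).eval 0 = b ^ 2 ^ m := by
  rw [traceNumerator, eval_finsetSum, Finset.sum_range_succ, Finset.sum_eq_zero]
  · simp
  · intro i hi
    have := Nat.pow_lt_pow_right one_lt_two (Finset.mem_range.1 hi)
    simp [Nat.sub_ne_zero_of_lt this]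

theorem aeval_traceNumerator {F : Type*} [Field F] [Algebra K F] (b : K) (m : ℕ) {c : F}
    (hc : c ≠ 0) : aeval c (traceNumerator b m) =
      c ^ 2 ^ m * frobeniusSum (m + 1) (c + algebraMap K F b / c) := by
  simp only [traceNumerator, frobeniusSum, map_sum, Finset.mul_sum, map_mul, map_pow, map_add,
    aeval_X, aeval_C]
  refine Finset.sum_congr rfl fun i hi ↦ ?_
  have hi : 2 ^ i ≤ 2 ^ m := Nat.pow_le_pow_right two_pos (Finset.mem_range_succ_iff.1 hi)
  rw [show c ^ 2 + algebraMap K F b = c * (c + algebraMap K F b / c) by field_simp, mul_pow,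
    ← mul_assoc, pow_sub_mul_pow c hi]

theorem eval_traceNumerator_eq_zero_iff {b c : K} (m : ℕ) (hc : c ≠ 0) :
    (traceNumerator b m).eval c = 0 ↔ frobeniusSum (m + 1) (c + b / c) = 0 := by
  rw [← coe_aeval_eq_eval, aeval_traceNumerator b m hc, Algebra.algebraMap_self_apply,
    mul_eq_zero, or_iff_right (pow_ne_zero _ hc)]

end TraceNumerator

section KloostermanCurve

open WeierstrassCurve.Affine

namespace binaryCurve

variable {F : Type*} [Field F] [CharP F 2] {b t : F}

theorem equation_add_div (ht : t ≠ 0) :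
    (binaryCurve (t + b / t) (b ^ 2)).Equation t b := by
  have : (2 : F) = 0 := CharTwo.two_eq_zero
  have : b / t * t = b := div_mul_cancel₀ b ht
  rw [equation_iff]
  grind

variable {n : ℕ}

theorem equation_frobeniusSum (ht : t ≠ 0) (hb : b ^ 2 ^ n = b) :
    (binaryCurve (t + b / t) (b ^ 2)).Equation (t ^ 2 ^ n)
      (b + t ^ 2 ^ n * frobeniusSum n (t + b / t)) := by
  have : (2 : F) = 0 := CharTwo.two_eq_zero
  have hv := sq_frobeniusSum_add_frobeniusSum n (t + b / t)
  rw [add_pow_char_pow, div_pow, hb] at hv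
  have hw : t ^ 2 ^ n ≠ 0 := pow_ne_zero _ ht
  rw [equation_iff]
  generalize frobeniusSum n (t + b / t) = v, t ^ 2 ^ n = w at *
  rw [show (b + w * v) ^ 2 + w * (b + w * v) = b ^ 2 + w * b + w ^ 2 * (v ^ 2 + v) by grind, hv]
  field_simp
  grind

theorem addX_slope_frobeniusSum [DecidableEq F] (ht : t ≠ 0) (hb : b ^ 2 ^ n = b)
    (htn : t ^ 2 ^ n ≠ t) :
    letI W := binaryCurve (t + b / t) (b ^ 2)
    W.addX (t ^ 2 ^ n) t
        (W.slope (t ^ 2 ^ n) t (b + t ^ 2 ^ n * frobeniusSum n (t + b / t)) b) =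
      t * (t ^ 2 ^ n * (frobeniusSum n (t + b / t) / (t ^ 2 ^ n - t)) ^ 2) := by
  have : (2 : F) = 0 := CharTwo.two_eq_zero
  have hadd := addX_slope_mul_sq htn (equation_frobeniusSum ht hb) (equation_add_div ht)
  have hv := sq_frobeniusSum_add_frobeniusSum n (t + b / t)
  rw [add_pow_char_pow, div_pow, hb] at hv
  have hw : t ^ 2 ^ n ≠ 0 := pow_ne_zero _ ht
  have hsub : t ^ 2 ^ n - t ≠ 0 := sub_ne_zero.2 htn
  rw [div_pow, mul_div, mul_div, eq_div_iff (pow_ne_zero 2 hsub), CharTwo.sub_eq_add, hadd]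
  generalize frobeniusSum n (t + b / t) = v, t ^ 2 ^ n = w at *
  field_simp at hv
  grind

end binaryCurve

variable {K : Type*} [Field K]

/-- The `x`-coordinate of the sum of the points `(X, b)` and `(X ^ 2 ^ n, b + X ^ 2 ^ n * v)`, where
`v = frobeniusSum n (X + b / X)`, of the curve `y² + xy = x³ + (X + b / X) x² + b²` over `K(X)`. -/
noncomputable def frobeniusAddX (n : ℕ) (b : K) : K⟮X⟯ :=
  RatFunc.X * (RatFunc.X ^ 2 ^ n *
    (frobeniusSum n (RatFunc.X + algebraMap K[X] K⟮X⟯ (C b) / RatFunc.X) /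
      (RatFunc.X ^ 2 ^ n - RatFunc.X)) ^ 2)

theorem frobeniusAddX_succ (m : ℕ) (b : K) :
    frobeniusAddX (m + 1) b = algebraMap K[X] K⟮X⟯ X *
      (algebraMap K[X] K⟮X⟯ (traceNumerator b m) /
        algebraMap K[X] K⟮X⟯ (X ^ 2 ^ (m + 1) - X)) ^ 2 := by
  have h := aeval_traceNumerator b m (RatFunc.X_ne_zero (K := K))
  rw [← RatFunc.algebraMap_X, aeval_algebraMap_apply, aeval_X_left_apply] at h
  rw [h, map_sub, map_pow, RatFunc.algebraMap_X, mul_div_assoc, mul_pow, ← pow_mul, ← pow_succ]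
  rfl

open binaryCurve in
theorem sq_ratHeight_frobeniusAddX_sub_le [CharP K 2] {n : ℕ} (hn : n ≠ 0) {b : K} (hb : b ≠ 0)
    (hbn : b ^ 2 ^ n = b) :
    ((ratHeight (frobeniusAddX n b) : ℤ) - 2 ^ n - 1) ^ 2 ≤ 4 * 2 ^ n := by
  classical
  have : CharP K⟮X⟯ 2 := charP_of_injective_algebraMap (algebraMap K K⟮X⟯).injective 2
  have ht : (RatFunc.X : K⟮X⟯) ≠ 0 := RatFunc.X_ne_zero
  have hX_pow : (RatFunc.X : K⟮X⟯) ^ 2 ^ n = algebraMap K[X] K⟮X⟯ (X ^ 2 ^ n) := by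
    rw [map_pow, RatFunc.algebraMap_X]
  have htn : (RatFunc.X : K⟮X⟯) ^ 2 ^ n ≠ RatFunc.X := by
    intro h
    rw [hX_pow, ← RatFunc.algebraMap_X] at h
    have := congrArg natDegree (RatFunc.algebraMap_injective K h)
    rw [natDegree_X_pow, natDegree_X] at this
    exact (Nat.one_lt_two_pow hn).ne' this
  have hβ : algebraMap K[X] K⟮X⟯ (C b) ^ 2 ^ n = algebraMap K[X] K⟮X⟯ (C b) := by
    rw [← map_pow, ← map_pow, hbn]
  have hP := equation_frobeniusSum ht hβ
  have hQ := equation_add_div (b := algebraMap K[X] K⟮X⟯ (C b)) ht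
  have hPQ := addX_slope_frobeniusSum ht hβ htn
  rw [← map_pow, ← map_pow] at hP hQ hPQ
  have ha : b ^ 2 ≠ 0 := pow_ne_zero 2 hb
  have hA₆ : algebraMap K[X] K⟮X⟯ (C (b ^ 2)) ≠ 0 := RatFunc.algebraMap_ne_zero (C_ne_zero.2 ha)
  have h := sq_pointHeight_add_sub_le ha
    (.some _ _ ((equation_iff_nonsingular hA₆).1 hP))
    (.some _ _ ((equation_iff_nonsingular hA₆).1 hQ))
  rw [Point.add_of_X_ne htn] at h
  simp only [pointHeight] at h
  rw [hPQ, ← frobeniusAddX] at h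
  have height_P : ratHeight ((RatFunc.X : K⟮X⟯) ^ 2 ^ n) = 2 ^ n := by
    rw [hX_pow, ratHeight_algebraMap, natDegree_X_pow]
  have height_Q : ratHeight (RatFunc.X : K⟮X⟯) = 1 := by
    rw [← RatFunc.algebraMap_X, ratHeight_algebraMap, natDegree_X]
  simpa only [height_P, height_Q, Nat.cast_pow, Nat.cast_ofNat, Nat.cast_one, mul_one] using h

variable [Fintype K]

theorem prod_X_sub_C_eq_X_pow_card_sub_X : ∏ c : K, (X - C c) = X ^ Fintype.card K - X := by
  have hcard : 1 < Fintype.card K := Fintype.one_lt_card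
  have hroots := FiniteField.roots_X_pow_card_sub_X K
  have hdeg := FiniteField.X_pow_card_sub_X_natDegree_eq K hcard
  have hmonic : (X ^ Fintype.card K - X : K[X]).Monic :=
    monic_X_pow_sub (by rw [degree_X]; exact_mod_cast hcard)
  have h := prod_multiset_X_sub_C_of_monic_of_roots_card_eq hmonic
    (by rw [hroots, hdeg, Finset.card_val, Finset.card_univ])
  rwa [hroots] at h

variable [DecidableEq K]

theorem card_eval_traceNumerator_eq_zero (m : ℕ) {b : K} (hb : b ≠ 0) :
    (Finset.univ.filter fun c ↦ (traceNumerator b m).eval c = 0).card =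
      (Finset.univ.filter fun x : Kˣ ↦ frobeniusSum (m + 1) (x + b / x : K) = 0).card := by
  refine (Finset.card_nbij (fun x : Kˣ ↦ (x : K)) ?_ Units.val_injective.injOn ?_).symm
  · intro x hx
    simpa [eval_traceNumerator_eq_zero_iff m x.ne_zero] using hx
  · intro c hc
    have hc : (traceNumerator b m).eval c = 0 := by simpa using hc
    have hc0 : c ≠ 0 := by
      rintro rfl
      rw [eval_zero_traceNumerator] at hc
      exact pow_ne_zero _ hb hc
    exact ⟨Units.mk0 c hc0, by simpa using (eval_traceNumerator_eq_zero_iff m hc0).1 hc, rfl⟩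

theorem ratHeight_frobeniusAddX_add {m : ℕ} (hK : Fintype.card K = 2 ^ (m + 1)) {b : K}
    (hb : b ≠ 0) : ratHeight (frobeniusAddX (m + 1) b) +
      2 * (Finset.univ.filter fun x : Kˣ ↦ frobeniusSum (m + 1) (x + b / x : K) = 0).card =
        2 * 2 ^ (m + 1) := by
  rw [frobeniusAddX_succ, ← hK, ← prod_X_sub_C_eq_X_pow_card_sub_X,
    ← card_eval_traceNumerator_eq_zero m hb, ← Finset.card_univ]
  apply ratHeight_X_mul_div_prod_sq (Finset.mem_univ 0)
  · rw [natDegree_traceNumerator, ← hK, Finset.card_univ]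
  · rw [eval_zero_traceNumerator]
    exact pow_ne_zero _ hb

theorem sq_sub_two_mul_card_frobeniusSum_eq_zero_le [CharP K 2] {n : ℕ}
    (hK : Fintype.card K = 2 ^ n) {b : K} (hb : b ≠ 0) :
    ((2 ^ n : ℤ) - 1 -
      2 * (Finset.univ.filter fun x : Kˣ ↦ frobeniusSum n (x + b / x : K) = 0).card) ^ 2 ≤
        4 * 2 ^ n := by
  obtain ⟨m, rfl⟩ : ∃ m, n = m + 1 := Nat.exists_eq_add_one_of_ne_zero <| by
    rintro rfl
    exact Fintype.one_lt_card.ne' hK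
  have hb_pow : b ^ 2 ^ (m + 1) = b := hK ▸ FiniteField.pow_card b
  have h_bound := sq_ratHeight_frobeniusAddX_sub_le m.add_one_ne_zero hb hb_pow
  have h_height := ratHeight_frobeniusAddX_add hK hb
  zify at h_height
  convert h_bound using 2
  linarith

end KloostermanCurve

section TraceChar

variable {F : Type*} [Field F] [Algebra (ZMod 2) F]

variable (F) in
/-- The additive character `z ↦ (-1) ^ Tr z` of a field `F` of characteristic two, where `Tr` is the
trace of `F` over the field with two elements. -/
noncomputable def traceChar : AddChar F ℤ :=
  (AddChar.zmodChar 2 (neg_one_sq : (-1 : ℤ) ^ 2 = 1)).compAddMonoidHom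
    (Algebra.trace (ZMod 2) F).toAddMonoidHom

theorem traceChar_apply (z : F) : traceChar F z = (-1) ^ (Algebra.trace (ZMod 2) F z).val :=
  AddChar.zmodChar_apply neg_one_sq _

theorem traceChar_eq_ite (z : F) :
    traceChar F z = if Algebra.trace (ZMod 2) F z = 0 then 1 else -1 := by
  rw [traceChar_apply]
  generalize Algebra.trace (ZMod 2) F z = c
  fin_cases c <;> rfl

theorem traceChar_eq_one_or_neg_one (z : F) : traceChar F z = 1 ∨ traceChar F z = -1 := by
  rw [traceChar_apply]
  exact neg_one_pow_eq_or ℤ _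

theorem traceChar_isPrimitive [Finite F] : (traceChar F).IsPrimitive := by
  apply AddChar.IsPrimitive.of_ne_one
  obtain ⟨z, hz⟩ := Algebra.trace_surjective (ZMod 2) F 1
  intro h
  have : traceChar F z = 1 := by rw [h, AddChar.one_apply]
  norm_num [traceChar_eq_ite, hz] at this

theorem sum_traceChar_mul [Fintype F] {s : F} (hs : s ≠ 0) : ∑ z, traceChar F (s * z) = 0 := by
  classical
  simp only [mul_comm s, AddChar.sum_mulShift s traceChar_isPrimitive, if_neg hs, Nat.cast_zero]

theorem traceChar_trace [Finite F] {L : Type*} [Field L] [Finite L] [Algebra F L]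
    [Algebra (ZMod 2) L] (z : L) : traceChar F (Algebra.trace F L z) = traceChar L z := by
  simp only [traceChar_apply, Algebra.trace_trace]

variable [Fintype F] [DecidableEq F]

theorem traceChar_eq_ite_frobeniusSum {n : ℕ} (hF : Fintype.card F = 2 ^ n)
    (z : F) : traceChar F z = if frobeniusSum n z = 0 then 1 else -1 := by
  have finrank_eq : Module.finrank (ZMod 2) F = n := by
    rw [Module.card_eq_pow_finrank (K := ZMod 2), ZMod.card] at hF
    exact Nat.pow_right_injective le_rfl hF
  have trace_eq : algebraMap (ZMod 2) F (Algebra.trace (ZMod 2) F z) = frobeniusSum n z := by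
    rw [FiniteField.algebraMap_trace_eq_sum_pow, finrank_eq, Nat.card_zmod, frobeniusSum]
  simp only [traceChar_eq_ite, ← trace_eq, map_eq_zero]

theorem sq_sum_traceChar_add_div_le {b : F} (hb : b ≠ 0) :
    (∑ x : Fˣ, traceChar F (x + b / x)) ^ 2 ≤ 4 * Fintype.card F := by
  have : CharP F 2 := charP_of_injective_algebraMap (algebraMap (ZMod 2) F).injective 2
  obtain ⟨n, hn⟩ : ∃ n, Fintype.card F = 2 ^ n :=
    ⟨_, by rw [Module.card_eq_pow_finrank (K := ZMod 2), ZMod.card]⟩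
  have card_add_card := Finset.card_filter_add_card_filter_not
    (s := Finset.univ) (fun x : Fˣ ↦ frobeniusSum n (x + b / x : F) = 0)
  rw [Finset.card_univ, Fintype.card_units, hn] at card_add_card
  have h := sq_sub_two_mul_card_frobeniusSum_eq_zero_le hn hb
  rw [← neg_sq] at h
  simp only [traceChar_eq_ite_frobeniusSum hn, Finset.sum_ite, Finset.sum_const, hn,
    Nat.cast_pow, Nat.cast_ofNat]
  zify [Nat.one_le_two_pow] at card_add_card
  convert h using 2
  simp only [nsmul_eq_mul]
  linarith

end TraceChar

section TwoToOne

theorem sum_comp_eq_mul_sum_of_card_fiber_le {α β R : Type*} [Fintype α] [Fintype β]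
    [DecidableEq β] [Semiring R] {f : α → β} {k : ℕ}
    (hf : ∀ b, (Finset.univ.filter fun a ↦ f a = b).card ≤ k)
    (hcard : Fintype.card α = k * Fintype.card β) (g : β → R) :
    ∑ a, g (f a) = k * ∑ b, g b := by
  have card_fiber_eq : ∀ b, (Finset.univ.filter fun a ↦ f a = b).card = k := by
    have sum_card : ∑ b, (Finset.univ.filter fun a ↦ f a = b).card = ∑ _ : β, k := by
      rw [← Finset.card_eq_sum_card_fiberwise fun _ _ ↦ Finset.mem_univ _, Finset.card_univ, hcard,
        Finset.sum_const, Finset.card_univ, smul_eq_mul, mul_comm]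
    simpa using (Finset.sum_eq_sum_iff_of_le fun b _ ↦ hf b).1 sum_card
  rw [← Finset.sum_fiberwise _ f, Finset.mul_sum]
  refine Finset.sum_congr rfl fun b _ ↦ ?_
  rw [Finset.sum_congr rfl fun a ha ↦ by rw [(Finset.mem_filter.1 ha).2], Finset.sum_const,
    card_fiber_eq, nsmul_eq_mul]

theorem add_inv_eq_add_inv_iff {F : Type*} [Field F] {x y : F} (hx : x ≠ 0) (hy : y ≠ 0) :
    x + x⁻¹ = y + y⁻¹ ↔ x = y ∨ x = y⁻¹ := by
  have key : (x - y) * (x - y⁻¹) = x * (x + x⁻¹ - (y + y⁻¹)) := by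
    field_simp
    ring
  rw [← sub_eq_zero, ← sub_eq_zero (a := x) (b := y), ← sub_eq_zero (a := x) (b := y⁻¹),
    ← mul_eq_zero, key, mul_eq_zero, or_iff_right hx]

end TwoToOne

section NormOneUnits

variable (K L : Type*) [Field K] [Field L] [Algebra K L]

/-- The norm-one torus of an extension `L / K`: the units of `L` whose norm to `K` is `1`. -/
noncomputable abbrev normOneUnits : Subgroup Lˣ := (Units.map (Algebra.norm K : L →* K)).ker

variable {K L}

theorem mem_normOneUnits {u : Lˣ} : u ∈ normOneUnits K L ↔ Algebra.norm K (u : L) = 1 := by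
  rw [MonoidHom.mem_ker, Units.ext_iff, Units.coe_map, Units.val_one]

variable [Finite L]

theorem algebraMap_trace_of_finrank_eq_two (h2 : Module.finrank K L = 2) (z : L) :
    algebraMap K L (Algebra.trace K L z) = z + z ^ Nat.card K := by
  rw [FiniteField.algebraMap_trace_eq_sum_pow, h2]
  simp [Finset.sum_range_succ]

theorem algebraMap_norm_of_finrank_eq_two (h2 : Module.finrank K L = 2) (z : L) :
    algebraMap K L (Algebra.norm K z) = z * z ^ Nat.card K := by
  rw [FiniteField.algebraMap_norm_eq_pow_sum, h2, ← pow_succ']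
  simp [Finset.sum_range_succ, add_comm]

theorem algebraMap_trace_normOneUnits (h2 : Module.finrank K L = 2) (u : normOneUnits K L) :
    algebraMap K L (Algebra.trace K L (u.1 : L)) = u.1 + (u.1 : L)⁻¹ := by
  have h := algebraMap_norm_of_finrank_eq_two h2 (u.1 : L)
  rw [mem_normOneUnits.1 u.2, map_one] at h
  rw [algebraMap_trace_of_finrank_eq_two h2, eq_inv_of_mul_eq_one_right h.symm]

theorem card_normOneUnits (h2 : Module.finrank K L = 2) :
    Nat.card (normOneUnits K L) = Nat.card K + 1 := by
  have : Finite K := Finite.of_injective _ (algebraMap K L).injective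
  have h := (normOneUnits K L).card_mul_index
  rw [Subgroup.index_ker, MonoidHom.range_eq_top.2 (FiniteField.unitsMap_norm_surjective K L),
    Subgroup.card_top, Nat.card_units, Nat.card_units,
    Module.natCard_eq_pow_finrank (K := K) (V := L), h2, ← one_pow 2, Nat.sq_sub_sq, one_pow] at h
  exact Nat.eq_of_mul_eq_mul_right (Nat.sub_pos_of_lt Finite.one_lt_card) h

theorem trace_normOneUnits_eq_iff (h2 : Module.finrank K L = 2) {u v : normOneUnits K L} :
    Algebra.trace K L (u.1 : L) = Algebra.trace K L (v.1 : L) ↔ u = v ∨ u = v⁻¹ := by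
  rw [← (algebraMap K L).injective.eq_iff, algebraMap_trace_normOneUnits h2,
    algebraMap_trace_normOneUnits h2, add_inv_eq_add_inv_iff (Units.ne_zero _) (Units.ne_zero _)]
  norm_cast

variable [CharP K 2]

theorem eq_one_of_normOneUnits_eq_algebraMap (h2 : Module.finrank K L = 2)
    {u : normOneUnits K L} {x : Kˣ} (hux : (u.1 : L) = algebraMap K L x) : u = 1 ∧ x = 1 := by
  have hu := mem_normOneUnits.1 u.2
  rw [hux, Algebra.norm_algebraMap, h2] at hu
  have hx : x = 1 := Units.ext (CharTwo.sq_injective (by simpa using hu))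
  rw [hx, Units.val_one, map_one] at hux
  exact ⟨Subtype.ext (Units.ext hux), hx⟩

theorem eq_one_of_trace_normOneUnits_eq_add_inv (h2 : Module.finrank K L = 2)
    {u : normOneUnits K L} {x : Kˣ} (h : Algebra.trace K L (u.1 : L) = x + (x : K)⁻¹) :
    u = 1 ∧ x = 1 := by
  have h := congrArg (algebraMap K L) h
  rw [algebraMap_trace_normOneUnits h2, map_add, map_inv₀, add_inv_eq_add_inv_iff (Units.ne_zero _)
    ((_root_.map_ne_zero _).2 x.ne_zero), ← map_inv₀, ← Units.val_inv_eq_inv_val] at h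
  rcases h with h | h
  · exact eq_one_of_normOneUnits_eq_algebraMap h2 h
  · exact (eq_one_of_normOneUnits_eq_algebraMap h2 h).imp_right inv_eq_one.1

variable (K L) in
/-- The map `z ↦ z + z⁻¹` to `K` from the norm-one torus of `L / K`, where it is the trace, together
with its split counterpart, the multiplicative group of `K`. -/
noncomputable def torusTrace : normOneUnits K L ⊕ Kˣ → K :=
  Sum.elim (fun u ↦ Algebra.trace K L u.1) (fun x ↦ x + (x : K)⁻¹)

theorem torusTrace_eq_imp (h2 : Module.finrank K L = 2) (z : normOneUnits K L ⊕ Kˣ) :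
    ∃ z', ∀ w, torusTrace K L w = torusTrace K L z → w = z ∨ w = z' := by
  classical
  rcases z with u | x
  · refine ⟨if u = 1 then .inr 1 else .inl u⁻¹, ?_⟩
    rintro (v | y) h
    · rcases (trace_normOneUnits_eq_iff h2).1 h with rfl | rfl
      · exact .inl rfl
      · by_cases hu : u = 1 <;> simp [hu]
    · obtain ⟨rfl, rfl⟩ := eq_one_of_trace_normOneUnits_eq_add_inv h2 h.symm
      exact .inr (if_pos rfl).symm
  · refine ⟨if x = 1 then .inl 1 else .inr x⁻¹, ?_⟩
    rintro (v | y) h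
    · obtain ⟨rfl, rfl⟩ := eq_one_of_trace_normOneUnits_eq_add_inv h2 h
      exact .inr (if_pos rfl).symm
    · rcases (add_inv_eq_add_inv_iff y.ne_zero x.ne_zero).1 h with h | h
      · exact .inl (congrArg _ (Units.ext h))
      · obtain rfl : y = x⁻¹ := Units.ext (by simpa using h)
        by_cases hx : x = 1 <;> simp [hx]

variable [Fintype K] [DecidableEq K] [Fintype (normOneUnits K L)]

theorem card_torusTrace_fiber_le_two (h2 : Module.finrank K L = 2) (y : K) :
    (Finset.univ.filter fun z ↦ torusTrace K L z = y).card ≤ 2 := by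
  classical
  rcases Finset.eq_empty_or_nonempty (Finset.univ.filter fun z ↦ torusTrace K L z = y)
    with h | ⟨z, hz⟩
  · simp [h]
  · obtain ⟨z', hz'⟩ := torusTrace_eq_imp h2 z
    refine (Finset.card_le_card (t := {z, z'}) fun w hw ↦ ?_).trans Finset.card_le_two
    rw [Finset.mem_filter_univ] at hz hw
    simpa using hz' w (hw.trans hz.symm)

theorem sum_trace_normOneUnits_add_sum_add_inv {R : Type*} [Semiring R]
    (h2 : Module.finrank K L = 2) (f : K → R) :
    ∑ u : normOneUnits K L, f (Algebra.trace K L u.1) + ∑ x : Kˣ, f (x + (x : K)⁻¹) =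
      2 * ∑ y, f y := by
  have card_eq : Fintype.card (normOneUnits K L ⊕ Kˣ) = 2 * Fintype.card K := by
    have : 0 < Fintype.card K := Fintype.card_pos
    rw [Fintype.card_sum, Fintype.card_units, ← Nat.card_eq_fintype_card, card_normOneUnits h2,
      Nat.card_eq_fintype_card]
    omega
  rw [← Nat.cast_two (R := R),
    ← sum_comp_eq_mul_sum_of_card_fiber_le (card_torusTrace_fiber_le_two h2) card_eq,
    Fintype.sum_sum_type]
  rfl

end NormOneUnits

section TorusSum

variable {K L : Type*} [Field K] [Field L] [Algebra K L] [Algebra (ZMod 2) K] [Algebra (ZMod 2) L]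
  [Fintype K] [Finite L] [Fintype (normOneUnits K L)]

theorem sum_traceChar_algebraMap_mul_normOneUnits [DecidableEq K]
    (h2 : Module.finrank K L = 2) {s : K} (hs : s ≠ 0) :
    ∑ u : normOneUnits K L, traceChar L (algebraMap K L s * u.1) =
      -∑ x : Kˣ, traceChar K (x + s ^ 2 / x) := by
  have : CharP K 2 := charP_of_injective_algebraMap (algebraMap (ZMod 2) K).injective 2
  have h := sum_trace_normOneUnits_add_sum_add_inv (L := L) h2 fun y ↦ traceChar K (s * y)
  rw [sum_traceChar_mul hs, mul_zero] at h
  rw [eq_neg_iff_add_eq_zero, ← h]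
  congr 1
  · simp only [← smul_eq_mul, ← map_smul, traceChar_trace, algebraMap_smul]
  · rw [← Equiv.sum_comp (Equiv.mulLeft (Units.mk0 s hs))]
    refine Finset.sum_congr rfl fun x _ ↦ ?_
    congr 1
    simp only [Equiv.coe_mulLeft, Units.val_mul, Units.val_mk0]
    field_simp

theorem sq_sum_traceChar_mul_normOneUnits_le (h2 : Module.finrank K L = 2) {c : L} (hc : c ≠ 0) :
    (∑ u : normOneUnits K L, traceChar L (c * u.1)) ^ 2 ≤ 4 * Fintype.card K := by
  classical
  have : CharP K 2 := charP_of_injective_algebraMap (algebraMap (ZMod 2) K).injective 2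
  obtain ⟨s, hs⟩ := FiniteField.isSquare_of_char_two (ringChar.eq K 2) (Algebra.norm K c)
  have hs0 : s ≠ 0 := by
    rintro rfl
    rw [mul_zero, Algebra.norm_eq_zero_iff] at hs
    exact hc hs
  have hs0' : algebraMap K L s ≠ 0 := (_root_.map_ne_zero _).2 hs0
  let w : normOneUnits K L := ⟨Units.mk0 (c / algebraMap K L s) (div_ne_zero hc hs0'), by
    rw [mem_normOneUnits, Units.val_mk0, div_eq_mul_inv, ← map_inv₀, map_mul,
      Algebra.norm_algebraMap, h2, hs, ← sq, ← mul_pow, mul_inv_cancel₀ hs0, one_pow]⟩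
  have sum_eq : ∑ u : normOneUnits K L, traceChar L (c * u.1) =
      ∑ u : normOneUnits K L, traceChar L (algebraMap K L s * u.1) := by
    rw [← Equiv.sum_comp (Equiv.mulLeft w) fun u : normOneUnits K L ↦
      traceChar L (algebraMap K L s * u.1)]
    refine Finset.sum_congr rfl fun u _ ↦ ?_
    congr 1
    simp only [Equiv.coe_mulLeft, Subgroup.coe_mul, Units.val_mul, w, Units.val_mk0]
    field_simp
  rw [sum_eq, sum_traceChar_algebraMap_mul_normOneUnits h2 hs0, neg_sq]
  exact sq_sum_traceChar_add_div_le (pow_ne_zero 2 hs0)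

end TorusSum

section Parity

theorem odd_sum_of_odd_card {ι : Type*} [Fintype ι] (hι : Odd (Fintype.card ι)) {f : ι → ℤ}
    (hf : ∀ i, Odd (f i)) : Odd (∑ i, f i) := by
  rw [← ZMod.intCast_eq_one_iff_odd, Int.cast_sum]
  simp [ZMod.intCast_eq_one_iff_odd.2 (hf _), ZMod.natCast_eq_one_iff_odd.2 hι]

theorem abs_le_sqrt_sub_of_odd_of_sq_le {m : ℕ} {z : ℤ} (hz : Odd z) (hzm : z ^ 2 ≤ m) :
    |z| ≤ (Nat.sqrt m : ℤ) - if Odd (Nat.sqrt m) then 0 else 1 := by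
  have natAbs_le : z.natAbs ≤ Nat.sqrt m := by
    rw [Nat.le_sqrt']
    zify
    rwa [sq_abs]
  rw [Int.abs_eq_natAbs]
  split_ifs with h
  · omega
  · have : z.natAbs ≠ Nat.sqrt m := fun h' ↦ h (h' ▸ Int.natAbs_odd.2 hz)
    omega

end Parity

section ZModEquiv

variable {K L : Type*} [Field K] [Field L] [Algebra K L] [Finite L]

theorem nonempty_zmod_mulEquiv_normOneUnits (h2 : Module.finrank K L = 2) :
    Nonempty (Multiplicative (ZMod (Nat.card K + 1)) ≃* normOneUnits K L) := by
  rw [← card_normOneUnits h2]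
  exact ⟨zmodCyclicMulEquiv inferInstance⟩

theorem eq_natCard_add_one_of_zmod_mulEquiv_normOneUnits (h2 : Module.finrank K L = 2) {N : ℕ}
    (φ : Multiplicative (ZMod N) ≃* normOneUnits K L) : N = Nat.card K + 1 := by
  rw [← card_normOneUnits h2, ← Nat.card_congr φ.toEquiv]
  exact (Nat.card_zmod N).symm

end ZModEquiv

section TorusSequence

variable {K L : Type*} [Field K] [Field L] [Algebra K L] [Algebra (ZMod 2) L] {N : ℕ}
  (φ : Multiplicative (ZMod N) ≃* normOneUnits K L)

/-- The `±1`-valued sequence of period `N` attached to `a : Kˣ`: the values of the character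
`traceChar L` on the coset by `a` of the norm-one torus of `L / K`, enumerated by means of an
isomorphism `φ` of this torus with a cyclic group of order `N`. -/
noncomputable def torusSequence (a : Kˣ) (j : ZMod N) : ℤ :=
  traceChar L (algebraMap K L a * (φ (.ofAdd j)).1)

theorem torusSequence_eq_one_or_neg_one (a : Kˣ) (j : ZMod N) :
    torusSequence φ a j = 1 ∨ torusSequence φ a j = -1 :=
  traceChar_eq_one_or_neg_one _

theorem sum_torusSequence_mul_torusSequence [NeZero N] [Fintype (normOneUnits K L)] (a b : Kˣ)
    (t : ZMod N) :
    ∑ j, torusSequence φ a j * torusSequence φ b (j + t) =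
      ∑ u : normOneUnits K L,
        traceChar L ((algebraMap K L a + algebraMap K L b * (φ (.ofAdd t)).1) * u.1) := by
  refine Fintype.sum_equiv (Multiplicative.ofAdd.trans φ.toEquiv) _ _ fun j ↦ ?_
  simp only [torusSequence, ← AddChar.map_add_eq_mul, ofAdd_add, map_mul, Subgroup.coe_mul,
    Units.val_mul, Equiv.trans_apply, MulEquiv.toEquiv_eq_coe, EquivLike.coe_coe]
  congr 1
  ring

variable [Algebra (ZMod 2) K] [Finite L]

theorem algebraMap_add_algebraMap_mul_ne_zero (h2 : Module.finrank K L = 2) {a b : Kˣ} {t : ZMod N}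
    (hne : a ≠ b ∨ t ≠ 0) : algebraMap K L a + algebraMap K L b * (φ (.ofAdd t)).1 ≠ 0 := by
  have : CharP K 2 := charP_of_injective_algebraMap (algebraMap (ZMod 2) K).injective 2
  have : CharP L 2 := charP_of_injective_algebraMap (algebraMap (ZMod 2) L).injective 2
  intro h
  have φ_eq : ((φ (.ofAdd t)).1 : L) = algebraMap K L (a / b : Kˣ) := by
    rw [Units.val_div_eq_div_val, map_div₀, eq_div_iff ((_root_.map_ne_zero _).2 b.ne_zero),
      mul_comm, CharTwo.add_eq_zero.1 h]
  obtain ⟨hφ, hab⟩ := eq_one_of_normOneUnits_eq_algebraMap h2 φ_eq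
  rw [map_eq_one_iff _ φ.injective, ofAdd_eq_one] at hφ
  exact hne.elim (absurd (div_eq_one.1 hab)) (absurd hφ)

variable [NeZero N]

theorem sq_sum_torusSequence_mul_torusSequence_le [Fintype K] (h2 : Module.finrank K L = 2)
    {a b : Kˣ} {t : ZMod N} (hne : a ≠ b ∨ t ≠ 0) :
    (∑ j, torusSequence φ a j * torusSequence φ b (j + t)) ^ 2 ≤ 4 * Fintype.card K := by
  have := Fintype.ofFinite (normOneUnits K L)
  rw [sum_torusSequence_mul_torusSequence]
  exact sq_sum_traceChar_mul_normOneUnits_le h2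
    (algebraMap_add_algebraMap_mul_ne_zero φ h2 hne)

theorem abs_sum_torusSequence_mul_torusSequence_le [Fintype K] (h2 : Module.finrank K L = 2)
    {a b : Kˣ} {t : ZMod N} (hne : a ≠ b ∨ t ≠ 0) :
    |∑ j, torusSequence φ a j * torusSequence φ b (j + t)| ≤
      (Nat.sqrt (4 * Fintype.card K) : ℤ) -
        if Odd (Nat.sqrt (4 * Fintype.card K)) then 0 else 1 := by
  have : CharP K 2 := charP_of_injective_algebraMap (algebraMap (ZMod 2) K).injective 2
  have odd_period : Odd N := by
    rw [eq_natCard_add_one_of_zmod_mulEquiv_normOneUnits h2 φ, Nat.card_eq_fintype_card]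
    exact (Nat.even_iff.2 (FiniteField.even_card_of_char_two (ringChar.eq K 2))).add_one
  have odd_torusSequence (c j) : Odd (torusSequence φ c j) := by
    rcases torusSequence_eq_one_or_neg_one φ c j with h | h <;> rw [h] <;> decide
  refine abs_le_sqrt_sub_of_odd_of_sq_le (odd_sum_of_odd_card (by rwa [ZMod.card]) fun j ↦
    (odd_torusSequence a j).mul (odd_torusSequence b _)) ?_
  exact_mod_cast sq_sum_torusSequence_mul_torusSequence_le φ h2 hne

-- Equal sequences have correlation `q + 1` at delay zero, and `(q + 1) ^ 2 > 4 * q`.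
theorem torusSequence_injective (h2 : Module.finrank K L = 2) :
    Function.Injective (torusSequence φ) := by
  have : Finite K := Finite.of_injective _ (algebraMap K L).injective
  have := Fintype.ofFinite K
  intro a b hab
  by_contra hne
  have sq_sum_le := sq_sum_torusSequence_mul_torusSequence_le φ h2 (t := 0) (.inl hne)
  have sum_eq : ∑ j, torusSequence φ a j * torusSequence φ b (j + 0) = N := by
    rw [← hab, Finset.sum_congr rfl (g := fun _ ↦ 1) fun j _ ↦ ?_]
    · simp
    · rw [add_zero]
      rcases torusSequence_eq_one_or_neg_one φ a j with h | h <;> rw [h] <;> norm_num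
  have one_lt_card : (1 : ℤ) < Fintype.card K := mod_cast Fintype.one_lt_card
  rw [sum_eq, eq_natCard_add_one_of_zmod_mulEquiv_normOneUnits h2 φ,
    Nat.card_eq_fintype_card] at sq_sum_le
  push_cast at sq_sum_le
  nlinarith

end TorusSequence

/-- Main Theorem 3.6. For `q = 2^n` there exists a family of `q - 1` distinct binary
(`±1`-valued) sequences of length `q + 1` whose maximum correlation (all nontrivial
autocorrelations `|Σ_j s_j s_{j+t}|`, `1 ≤ t ≤ q`, and all cross-correlations between
distinct sequences at any delay, indices mod `q+1`) is at most `⌊2√q⌋ - δ_q`, where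
`δ_q = 0` if `⌊2√q⌋` is odd and `δ_q = 1` otherwise. Here `⌊2√q⌋ = Nat.sqrt (4q)`. -/
theorem stmt_17 (n : ℕ) (hn : 0 < n) :
    ∃ S : Fin (2 ^ n - 1) → (ZMod (2 ^ n + 1) → ℤ),
      Function.Injective S ∧
      (∀ i j, S i j = 1 ∨ S i j = -1) ∧
      (∀ i, ∀ t : ZMod (2 ^ n + 1), t ≠ 0 →
        |∑ j : ZMod (2 ^ n + 1), S i j * S i (j + t)| ≤
          (Nat.sqrt (4 * 2 ^ n) : ℤ) - (if Odd (Nat.sqrt (4 * 2 ^ n)) then 0 else 1)) ∧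
      (∀ i i', i ≠ i' → ∀ t : ZMod (2 ^ n + 1),
        |∑ j : ZMod (2 ^ n + 1), S i j * S i' (j + t)| ≤
          (Nat.sqrt (4 * 2 ^ n) : ℤ) - (if Odd (Nat.sqrt (4 * 2 ^ n)) then 0 else 1)) := by
  classical
  let K := GaloisField 2 n
  have := Fintype.ofFinite K
  have card_K : Fintype.card K = 2 ^ n := by
    rw [← Nat.card_eq_fintype_card, GaloisField.card 2 n hn.ne']
  let L := FiniteField.Extension K 2 2
  have h2 : Module.finrank K L = 2 := FiniteField.finrank_extension K 2 2
  obtain ⟨φ⟩ := nonempty_zmod_mulEquiv_normOneUnits h2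
  rw [Nat.card_eq_fintype_card, card_K] at φ
  let e : Fin (2 ^ n - 1) ≃ Kˣ :=
    (Fintype.equivFinOfCardEq (by rw [Fintype.card_units, card_K])).symm
  refine ⟨torusSequence φ ∘ e, (torusSequence_injective φ h2).comp e.injective,
    fun i ↦ torusSequence_eq_one_or_neg_one φ (e i), fun i t ht ↦ ?_, fun i i' hi t ↦ ?_⟩
  · simpa [card_K] using abs_sum_torusSequence_mul_torusSequence_le φ h2 (.inr ht)
  · simpa [card_K] using
      abs_sum_torusSequence_mul_torusSequence_le φ h2 (.inl (e.injective.ne hi))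
end
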